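/- arXiv:math/0101039 — 2 statements merged into one kernel-verified Lean document; each statement's English description precedes it below -/
import Mathlib

section
/- Let (H, R) be a quasitriangular Hopf algebra over a field k and V a quantum commutative left H-module algebra. In the smash product V#H define α : V → V#H, α(v) = v⊗1, and β : V → V#H, β(v) = Σ (R²·v)⊗R¹. Then β is an algebra anti-homomorphism (β(vw) = β(w)β(v) and β(1) = 1⊗1) and α(v)β(w) = β(w)α(v) for all v, w ∈ V. -/
open TensorProduct LinearMap

noncomputable section

section RegularActions

variable {k H : Type*} [Field k] [Ring H] [Algebra k H]

/-- Left regular action of `H` on its dual: `(h ⇀ p)(x) = p (x * h)`. -/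
def lact (h : H) (p : Module.Dual k H) : Module.Dual k H :=
  p ∘ₗ LinearMap.mulRight k h

/-- Right regular action of `H` on its dual: `(p ↼ h)(x) = p (h * x)`. -/
def ract (h : H) (p : Module.Dual k H) : Module.Dual k H :=
  p ∘ₗ LinearMap.mulLeft k h

end RegularActions

section Legs

variable (k H : Type*) [Field k] [Ring H] [Algebra k H]

/-- `R ⊗ 1` viewed in `H ⊗ (H ⊗ H)` (the element `R₁₂`). -/
def leg12 (R : H ⊗[k] H) : H ⊗[k] (H ⊗[k] H) :=
  TensorProduct.assoc k H H H (R ⊗ₜ[k] (1 : H))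

/-- The element `R₂₃ = 1 ⊗ R` of `H ⊗ (H ⊗ H)`. -/
def leg23 (R : H ⊗[k] H) : H ⊗[k] (H ⊗[k] H) := (1 : H) ⊗ₜ[k] R

/-- The element `R₁₃` of `H ⊗ (H ⊗ H)`. -/
def leg13 (R : H ⊗[k] H) : H ⊗[k] (H ⊗[k] H) :=
  lTensor H (TensorProduct.comm k H H).toLinearMap (leg12 k H R)

end Legs

section QuasiTriangular

variable (k H : Type*) [Field k] [Ring H] [Bialgebra k H]

/-- `R` is an R-matrix making the bialgebra `H` quasitriangular:
`R` is invertible, `(Δ ⊗ id)(R) = R₁₃ R₂₃`, `(id ⊗ Δ)(R) = R₁₃ R₁₂`, and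
`Δᶜᵒᵖ(h) R = R Δ(h)` for all `h`. -/
def IsRMatrix (R : H ⊗[k] H) : Prop :=
  IsUnit R
  ∧ TensorProduct.assoc k H H H
      (rTensor H (Coalgebra.comul (R := k) (A := H)) R) = leg13 k H R * leg23 k H R
  ∧ lTensor H (Coalgebra.comul (R := k) (A := H)) R = leg13 k H R * leg12 k H R
  ∧ ∀ h : H, (TensorProduct.comm k H H) (Coalgebra.comul h) * R = R * Coalgebra.comul h

variable {k H}

/-- The convolution product on `H*`: `(f g)(h) = Σ f(h₁) g(h₂)`. -/
def conv (f g : Module.Dual k H) : Module.Dual k H :=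
  LinearMap.mul' k k ∘ₗ TensorProduct.map f g ∘ₗ (Coalgebra.comul (R := k) (A := H))

/-- The multiplication of `H*_R`: `(f · g)(h) = Σ g(h₁ R²) f(h₂ R¹)`,
i.e. `f · g = Σ (R² ⇀ g)(R¹ ⇀ f)`. -/
def mulR (R : H ⊗[k] H) (f g : Module.Dual k H) : Module.Dual k H :=
  LinearMap.mul' k k ∘ₗ TensorProduct.map g f
    ∘ₗ LinearMap.mulRight k ((TensorProduct.comm k H H) R)
    ∘ₗ (Coalgebra.comul (R := k) (A := H))

/-- The map `Q : H* → H`, `Q(p) = Σ p(R² r¹) R¹ r²`, i.e. `Q(p) = (p ⊗ id)(R₂₁ R)`. -/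
def Qmap (R : H ⊗[k] H) : Module.Dual k H →ₗ[k] H :=
  (TensorProduct.lid k H).toLinearMap
    ∘ₗ rTensor H (contractLeft k H)
    ∘ₗ (TensorProduct.assoc k (Module.Dual k H) H H).symm.toLinearMap
    ∘ₗ (TensorProduct.mk k (Module.Dual k H) (H ⊗[k] H)).flip
        ((TensorProduct.comm k H H) R * R)

end QuasiTriangular

section Smash

variable {k H V : Type*} [Field k] [Ring H] [HopfAlgebra k H] [Ring V] [Algebra k V]

/-- `V` is a left `H`-module algebra under the (`k`-bilinear) action `α`:
`1·v = v`, `(gh)·v = g·(h·v)`, `h·1 = ε(h)1` and `h·(vw) = Σ (h₁·v)(h₂·w)`. -/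
def IsModuleAlgebra (α : H →ₗ[k] V →ₗ[k] V) : Prop :=
  (∀ v : V, α 1 v = v)
  ∧ (∀ (g h : H) (v : V), α (g * h) v = α g (α h v))
  ∧ (∀ h : H, α h 1 = Coalgebra.counit (R := k) h • (1 : V))
  ∧ (∀ (h : H) (v w : V) (n : ℕ) (h₁ h₂ : Fin n → H),
      Coalgebra.comul (R := k) h = ∑ i, h₁ i ⊗ₜ[k] h₂ i →
      α h (v * w) = ∑ i, α (h₁ i) v * α (h₂ i) w)

/-- `V` is quantum commutative: `v w = Σ (R²·w)(R¹·v)`. -/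
def IsQuantumCommutative (α : H →ₗ[k] V →ₗ[k] V) (R : H ⊗[k] H) : Prop :=
  ∀ (v w : V) (n : ℕ) (R₁ R₂ : Fin n → H),
    R = ∑ i, R₁ i ⊗ₜ[k] R₂ i →
    v * w = ∑ i, α (R₂ i) w * α (R₁ i) v

/-- `m` is the multiplication of the smash product `V # H`:
`(v ⊗ h)(v' ⊗ h') = Σ v (h₁·v') ⊗ h₂ h'`. -/
def IsSmashMul (α : H →ₗ[k] V →ₗ[k] V)
    (m : V ⊗[k] H →ₗ[k] V ⊗[k] H →ₗ[k] V ⊗[k] H) : Prop :=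
  ∀ (v v' : V) (h h' : H) (n : ℕ) (h₁ h₂ : Fin n → H),
    Coalgebra.comul (R := k) h = ∑ i, h₁ i ⊗ₜ[k] h₂ i →
    m (v ⊗ₜ[k] h) (v' ⊗ₜ[k] h')
      = ∑ i, (v * α (h₁ i) v') ⊗ₜ[k] (h₂ i * h')

/-- The map `β : V → V # H`, `β(v) = Σ (R²·v) ⊗ R¹`. -/
def betaMap (α : H →ₗ[k] V →ₗ[k] V) (R : H ⊗[k] H) (v : V) : V ⊗[k] H :=
  (TensorProduct.comm k H V) (LinearMap.lTensor H (α.flip v) R)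

end Smash

/-!
Let `⋆` be the product of `V ⊗ Hᵐᵒᵖ`, that is `(v ⊗ g) ⋆ (w ⊗ h) = v w ⊗ h g`, and let `·` be the
product of `V # H`. The formula for `(id ⊗ Δ)(R)` gives `β(v w) = β(v) ⋆ β(w)`. The formula for
`(Δ ⊗ id)(R)` and quantum commutativity give `β(w) · z = z ⋆ β(w)` for every `z`. Since also
`(v ⊗ 1) · z = (v ⊗ 1) ⋆ z`, both relations follow: `β(v w) = β(v) ⋆ β(w) = β(w) · β(v)` and
`α(v) · β(w) = α(v) ⋆ β(w) = β(w) · α(v)`. Finally, `β(1) = 1 ⊗ 1` because `(id ⊗ ε)(R) = 1`, as one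
sees by applying `ε` to the middle factor of `(id ⊗ Δ)(R) = R₁₃ R₁₂` and cancelling `R`.
-/

section WeakRMatrix

variable {k H : Type*} [CommSemiring k] [Semiring H] [Bialgebra k H]

/-- A weak R-matrix: an invertible `R` satisfying the two hexagon identities
`(Δ ⊗ id)(R) = R₁₃ R₂₃` and `(id ⊗ Δ)(R) = R₁₃ R₁₂`, with no compatibility between `R` and the
opposite coproduct. The legs are written by inserting a unit next to one tensor factor, so that
the first identity lives in `(H ⊗ H) ⊗ H` and the second in `H ⊗ (H ⊗ H)`. -/
structure IsWeakRMatrix (R : H ⊗[k] H) : Prop where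
  isUnit : IsUnit R
  rTensor_comul : rTensor H (Coalgebra.comul (R := k)) R =
    rTensor H ((TensorProduct.mk k H H).flip 1) R * rTensor H (TensorProduct.mk k H H 1) R
  lTensor_comul : lTensor H (Coalgebra.comul (R := k)) R =
    lTensor H (TensorProduct.mk k H H 1) R * lTensor H ((TensorProduct.mk k H H).flip 1) R

theorem IsWeakRMatrix.lTensor_counit {R : H ⊗[k] H} (hR : IsWeakRMatrix R) :
    lTensor H (Coalgebra.counit (R := k)) R = (1 : H) ⊗ₜ[k] (1 : k) := by
  let counitId : H ⊗[k] H →ₐ[k] H := (Algebra.TensorProduct.lid k H).toAlgHom.comp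
    (Algebra.TensorProduct.map (Bialgebra.counitAlgHom k H) (AlgHom.id k H))
  let idCounitId := Algebra.TensorProduct.map (AlgHom.id k H) counitId
  let unitCounit : H →ₗ[k] H := Algebra.linearMap k H ∘ₗ Coalgebra.counit
  have idCounitId_lTensor (f : H →ₗ[k] H ⊗[k] H) (S : H ⊗[k] H) :
      idCounitId (lTensor H f S) = lTensor H (counitId.toLinearMap ∘ₗ f) S :=
    (lTensor_comp_apply H counitId.toLinearMap f S).symm
  have on_comul : counitId.toLinearMap ∘ₗ Coalgebra.comul = LinearMap.id := by
    ext a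
    exact (congrArg (TensorProduct.lid k H) (Coalgebra.rTensor_counit_comul a)).trans (by simp)
  have on_right : counitId.toLinearMap ∘ₗ TensorProduct.mk k H H 1 = LinearMap.id := by
    ext a
    simp [counitId]
  have on_left : counitId.toLinearMap ∘ₗ (TensorProduct.mk k H H).flip 1 = unitCounit := by
    ext a
    simp [counitId, unitCounit, Algebra.algebraMap_eq_smul_one]
  have absorb : R = R * lTensor H unitCounit R := by
    simpa only [map_mul, idCounitId_lTensor, on_comul, on_right, on_left, lTensor_id_apply]
      using congrArg idCounitId hR.lTensor_comul
  have eq_one : lTensor H unitCounit R = 1 := hR.isUnit.mul_left_cancel (by rw [← absorb, mul_one])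
  have counit_unitCounit : Coalgebra.counit ∘ₗ unitCounit = Coalgebra.counit (R := k) (A := H) := by
    ext a
    simp [unitCounit]
  rw [← counit_unitCounit, lTensor_comp_apply, eq_one, Algebra.TensorProduct.one_def, lTensor_tmul,
    Bialgebra.counit_one]

end WeakRMatrix

section TensorOp

variable {k V H : Type*} [CommSemiring k] [Semiring V] [Algebra k V] [Semiring H] [Algebra k H]

/-- The product `(v ⊗ g) ⋆ (w ⊗ h) = v w ⊗ h g` of the algebra `V ⊗ Hᵐᵒᵖ`, carried by `V ⊗ H`. -/
def tensorOpMul : V ⊗[k] H →ₗ[k] V ⊗[k] H →ₗ[k] V ⊗[k] H :=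
  TensorProduct.map₂ (LinearMap.mul k V) (LinearMap.mul k H).flip

@[simp]
theorem tensorOpMul_tmul_tmul (v w : V) (g h : H) :
    tensorOpMul (v ⊗ₜ[k] g) (w ⊗ₜ[k] h) = (v * w) ⊗ₜ[k] (h * g) := rfl

end TensorOp

section Action

variable {k H V : Type*} [CommSemiring k] [Semiring H] [Semiring V] [Algebra k V]

section Algebra

variable [Algebra k H]

/-- The linear map `g ⊗ h ↦ (g·v)(h·w)`, through which both the module algebra axiom and
quantum commutativity can be stated without choosing a decomposition of a tensor. -/
def actMul (α : H →ₗ[k] V →ₗ[k] V) (v w : V) : H ⊗[k] H →ₗ[k] V :=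
  LinearMap.mul' k V ∘ₗ TensorProduct.map (α.flip v) (α.flip w)

@[simp]
theorem actMul_tmul (α : H →ₗ[k] V →ₗ[k] V) (v w : V) (g h : H) :
    actMul α v w (g ⊗ₜ[k] h) = α g v * α h w := rfl

/-- Braided (or quantum) commutativity `v w = Σ (R²·w)(R¹·v)`, for an arbitrary tensor `R`. -/
def IsBraidedCommutative (α : H →ₗ[k] V →ₗ[k] V) (R : H ⊗[k] H) : Prop :=
  ∀ v w : V, v * w = actMul α w v (TensorProduct.comm k H H R)

/-- The map `v ↦ Σ (R²·v) ⊗ R¹` turning an action of `H` on `V` into a coaction, as a bilinear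
function of `R` and `v`. -/
def inducedCoaction (α : H →ₗ[k] V →ₗ[k] V) : H ⊗[k] H →ₗ[k] V →ₗ[k] V ⊗[k] H :=
  (lTensorHom H ∘ₗ α.flip).flip.compr₂ (TensorProduct.comm k H V).toLinearMap

theorem inducedCoaction_apply (α : H →ₗ[k] V →ₗ[k] V) (R : H ⊗[k] H) (v : V) :
    inducedCoaction α R v = TensorProduct.comm k H V (lTensor H (α.flip v) R) := rfl

@[simp]
theorem inducedCoaction_tmul (α : H →ₗ[k] V →ₗ[k] V) (g h : H) (v : V) :
    inducedCoaction α (g ⊗ₜ[k] h) v = α h v ⊗ₜ[k] g := rfl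

theorem comm_lTensor_actMul_mul (α : H →ₗ[k] V →ₗ[k] V) (S T : H ⊗[k] H) (v w : V) :
    TensorProduct.comm k H V (lTensor H (actMul α v w)
      (lTensor H (TensorProduct.mk k H H 1) S * lTensor H ((TensorProduct.mk k H H).flip 1) T)) =
    tensorOpMul (inducedCoaction α T v) (inducedCoaction α S w) := by
  induction S with
  | zero => simp
  | add S S' hS hS' => simp [add_mul, hS, hS']
  | tmul a b =>
    induction T with
    | zero => simp
    | add T T' hT hT' => simp only [map_add, mul_add, LinearMap.add_apply, hT, hT']
    | tmul c d => simp

/-- The map `(p ⊗ q) ⊗ r ↦ ((r·w) ⊗ 1) ((p ⊗ q)·z)`, whose value at `(Δ ⊗ id)(R)` is the smash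
product of `Σ (R²·w) ⊗ R¹` with `z`. -/
def smashContraction (α : H →ₗ[k] V →ₗ[k] V) (w : V) (z : V ⊗[k] H) :
    (H ⊗[k] H) ⊗[k] H →ₗ[k] V ⊗[k] H :=
  TensorProduct.lift <| (rTensorHom H ∘ₗ LinearMap.mul k V ∘ₗ α.flip w).flip ∘ₗ
    (TensorProduct.map₂ α (LinearMap.mul k H)).flip z

@[simp]
theorem smashContraction_tmul (α : H →ₗ[k] V →ₗ[k] V) (w : V) (z : V ⊗[k] H) (t : H ⊗[k] H)
    (r : H) : smashContraction α w z (t ⊗ₜ[k] r) = rTensor H (mulLeft k (α r w))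
      (TensorProduct.map₂ α (LinearMap.mul k H) t z) := rfl

theorem smashContraction_mul_tmul {α : H →ₗ[k] V →ₗ[k] V}
    (mul_act : ∀ g h v, α (g * h) v = α g (α h v)) (S : H ⊗[k] H) (w x : V) (q r h : H) :
    smashContraction α w (x ⊗ₜ[k] h)
      (rTensor H ((TensorProduct.mk k H H).flip 1) S * (1 ⊗ₜ[k] q) ⊗ₜ[k] r) =
    actMul α (α r w) x (TensorProduct.comm k H H S) ⊗ₜ[k] (q * h) := by
  induction S with
  | zero => simp
  | add S T hS hT => simp [add_mul, hS, hT, TensorProduct.add_tmul]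
  | tmul a b => simp [mul_act]

theorem IsBraidedCommutative.smashContraction_mul {α : H →ₗ[k] V →ₗ[k] V} {R : H ⊗[k] H}
    (hqc : IsBraidedCommutative α R) (mul_act : ∀ g h v, α (g * h) v = α g (α h v))
    (T : H ⊗[k] H) (w x : V) (h : H) :
    smashContraction α w (x ⊗ₜ[k] h)
      (rTensor H ((TensorProduct.mk k H H).flip 1) R * rTensor H (TensorProduct.mk k H H 1) T) =
    tensorOpMul (x ⊗ₜ[k] h) (inducedCoaction α T w) := by
  induction T with
  | zero => simp
  | add S T hS hT => simp [mul_add, hS, hT]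
  | tmul q r => simp [smashContraction_mul_tmul mul_act, ← hqc x (α r w)]

end Algebra

variable [Bialgebra k H]

/-- A module algebra over a bialgebra, with `h·(vw) = Σ (h₁·v)(h₂·w)` expressed as the image
of `Δ(h)` under `actMul`. -/
structure IsModuleAlgebraAction (α : H →ₗ[k] V →ₗ[k] V) : Prop where
  one_act (v : V) : α 1 v = v
  mul_act (g h : H) (v : V) : α (g * h) v = α g (α h v)
  act_one (h : H) : α h 1 = Coalgebra.counit (R := k) h • (1 : V)
  act_mul (h : H) (v w : V) : α h (v * w) = actMul α v w (Coalgebra.comul (R := k) h)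

/-- The product `(v ⊗ h)(v' ⊗ h') = Σ v (h₁·v') ⊗ h₂ h'` of the smash product `V # H`: let `h` act
diagonally on `V ⊗ H`, then multiply the first factor by `v` on the left. -/
def smashMul (α : H →ₗ[k] V →ₗ[k] V) : V ⊗[k] H →ₗ[k] V ⊗[k] H →ₗ[k] V ⊗[k] H :=
  TensorProduct.lift <| (LinearMap.mul k (Module.End k (V ⊗[k] H))).compl₁₂
    (rTensorHom H ∘ₗ LinearMap.mul k V)
    (TensorProduct.map₂ α (LinearMap.mul k H) ∘ₗ Coalgebra.comul)

theorem smashMul_tmul (α : H →ₗ[k] V →ₗ[k] V) (v : V) (h : H) (z : V ⊗[k] H) :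
    smashMul α (v ⊗ₜ[k] h) z = rTensor H (mulLeft k v)
      (TensorProduct.map₂ α (LinearMap.mul k H) (Coalgebra.comul (R := k) h) z) := rfl

variable {α : H →ₗ[k] V →ₗ[k] V} {R : H ⊗[k] H}

theorem IsModuleAlgebraAction.smashMul_tmul_one (hα : IsModuleAlgebraAction α) (v : V)
    (z : V ⊗[k] H) : smashMul α (v ⊗ₜ[k] 1) z = tensorOpMul (v ⊗ₜ[k] 1) z := by
  induction z with
  | zero => simp
  | add y z hy hz => simp [hy, hz]
  | tmul w h => simp [smashMul_tmul, Algebra.TensorProduct.one_def, hα.one_act]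

theorem IsModuleAlgebraAction.inducedCoaction_mul (hα : IsModuleAlgebraAction α)
    (hR : IsWeakRMatrix R) (v w : V) :
    inducedCoaction α R (v * w) = tensorOpMul (inducedCoaction α R v) (inducedCoaction α R w) := by
  have flip_mul : α.flip (v * w) = actMul α v w ∘ₗ Coalgebra.comul :=
    LinearMap.ext fun h => hα.act_mul h v w
  rw [inducedCoaction_apply, flip_mul, lTensor_comp_apply, hR.lTensor_comul,
    comm_lTensor_actMul_mul]

theorem IsModuleAlgebraAction.inducedCoaction_one (hα : IsModuleAlgebraAction α)
    (hR : IsWeakRMatrix R) : inducedCoaction α R 1 = (1 : V) ⊗ₜ[k] (1 : H) := by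
  have flip_one : α.flip 1 = toSpanSingleton k V 1 ∘ₗ Coalgebra.counit :=
    LinearMap.ext hα.act_one
  rw [inducedCoaction_apply, flip_one, lTensor_comp_apply, hR.lTensor_counit]
  simp

theorem smashMul_inducedCoaction_eq_smashContraction (α : H →ₗ[k] V →ₗ[k] V) (R : H ⊗[k] H)
    (w : V) (z : V ⊗[k] H) :
    smashMul α (inducedCoaction α R w) z =
      smashContraction α w z (rTensor H (Coalgebra.comul (R := k)) R) := by
  induction R with
  | zero => simp
  | add S T hS hT => simp [hS, hT]
  | tmul a b => simp [smashMul_tmul]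

theorem IsModuleAlgebraAction.smashMul_inducedCoaction (hα : IsModuleAlgebraAction α)
    (hR : IsWeakRMatrix R) (hqc : IsBraidedCommutative α R) (w : V) (z : V ⊗[k] H) :
    smashMul α (inducedCoaction α R w) z = tensorOpMul z (inducedCoaction α R w) := by
  induction z with
  | zero => simp
  | add y z hy hz => simp [hy, hz]
  | tmul x h =>
    rw [smashMul_inducedCoaction_eq_smashContraction, hR.rTensor_comul,
      hqc.smashContraction_mul hα.mul_act]

end Action

theorem beta_antihom_and_commutes_general
    {k H V : Type*} [CommSemiring k] [Semiring H] [Bialgebra k H] [Semiring V] [Algebra k V]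
    {R : H ⊗[k] H} (hR : IsWeakRMatrix R) {α : H →ₗ[k] V →ₗ[k] V} (hα : IsModuleAlgebraAction α)
    (hqc : IsBraidedCommutative α R) :
    (∀ v w : V, inducedCoaction α R (v * w) =
      smashMul α (inducedCoaction α R w) (inducedCoaction α R v))
    ∧ inducedCoaction α R 1 = (1 : V) ⊗ₜ[k] (1 : H)
    ∧ (∀ v w : V, smashMul α (v ⊗ₜ[k] 1) (inducedCoaction α R w) =
      smashMul α (inducedCoaction α R w) (v ⊗ₜ[k] 1)) := by
  refine ⟨fun v w => ?_, hα.inducedCoaction_one hR, fun v w => ?_⟩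
  · rw [hα.inducedCoaction_mul hR, hα.smashMul_inducedCoaction hR hqc]
  · rw [hα.smashMul_tmul_one, hα.smashMul_inducedCoaction hR hqc]

section Specialization

section Legs

variable {k H : Type*} [Field k] [Ring H] [Algebra k H]

theorem leg12_eq_lTensor (R : H ⊗[k] H) :
    leg12 k H R = lTensor H ((TensorProduct.mk k H H).flip 1) R :=
  LinearMap.congr_fun (f := (TensorProduct.assoc k H H H).toLinearMap ∘ₗ
    (TensorProduct.mk k (H ⊗[k] H) H).flip 1) (g := lTensor H ((TensorProduct.mk k H H).flip 1))
    (TensorProduct.ext' fun _ _ => rfl) R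

theorem leg13_eq_lTensor (R : H ⊗[k] H) :
    leg13 k H R = lTensor H (TensorProduct.mk k H H 1) R := by
  rw [leg13, leg12_eq_lTensor, ← lTensor_comp_apply]
  rfl

theorem assoc_rTensor_eq_leg13 (R : H ⊗[k] H) :
    TensorProduct.assoc k H H H (rTensor H ((TensorProduct.mk k H H).flip 1) R) = leg13 k H R := by
  rw [leg13_eq_lTensor]
  exact LinearMap.congr_fun (f := (TensorProduct.assoc k H H H).toLinearMap ∘ₗ
    rTensor H ((TensorProduct.mk k H H).flip 1)) (g := lTensor H (TensorProduct.mk k H H 1))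
    (TensorProduct.ext' fun _ _ => rfl) R

theorem assoc_rTensor_eq_leg23 (R : H ⊗[k] H) :
    TensorProduct.assoc k H H H (rTensor H (TensorProduct.mk k H H 1) R) = leg23 k H R :=
  LinearMap.congr_fun (f := (TensorProduct.assoc k H H H).toLinearMap ∘ₗ
    rTensor H (TensorProduct.mk k H H 1)) (g := TensorProduct.mk k H (H ⊗[k] H) 1)
    (TensorProduct.ext' fun _ _ => rfl) R

end Legs

theorem IsRMatrix.isWeakRMatrix {k H : Type*} [Field k] [Ring H] [Bialgebra k H] {R : H ⊗[k] H}
    (hR : IsRMatrix k H R) : IsWeakRMatrix R := by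
  obtain ⟨isUnit, rTensor_comul, lTensor_comul, -⟩ := hR
  refine ⟨isUnit, ?_, by rw [lTensor_comul, leg13_eq_lTensor, leg12_eq_lTensor]⟩
  apply (Algebra.TensorProduct.assoc k k k H H H).injective
  rw [map_mul]
  exact rTensor_comul.trans <|
    congrArg₂ (· * ·) (assoc_rTensor_eq_leg13 R).symm (assoc_rTensor_eq_leg23 R).symm

variable {k H V : Type*} [Field k] [Ring H] [HopfAlgebra k H] [Ring V] [Algebra k V]
  {α : H →ₗ[k] V →ₗ[k] V}

theorem IsModuleAlgebra.isModuleAlgebraAction (hα : IsModuleAlgebra α) :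
    IsModuleAlgebraAction α := by
  obtain ⟨one_act, mul_act, act_one, act_mul⟩ := hα
  refine ⟨one_act, mul_act, act_one, fun h v w => ?_⟩
  obtain ⟨n, h₁, h₂, comul_eq⟩ :=
    TensorProduct.exists_sum_tmul_eq (Coalgebra.comul (R := k) h)
  simp [act_mul h v w n h₁ h₂ comul_eq, comul_eq]

theorem IsQuantumCommutative.isBraidedCommutative {R : H ⊗[k] H}
    (hqc : IsQuantumCommutative α R) : IsBraidedCommutative α R := by
  intro v w
  obtain ⟨n, R₁, R₂, R_eq⟩ := TensorProduct.exists_sum_tmul_eq R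
  simp [hqc v w n R₁ R₂ R_eq, R_eq]

theorem IsSmashMul.eq_smashMul {m : V ⊗[k] H →ₗ[k] V ⊗[k] H →ₗ[k] V ⊗[k] H}
    (hm : IsSmashMul α m) : m = smashMul α := by
  ext v h v' h'
  obtain ⟨n, h₁, h₂, comul_eq⟩ :=
    TensorProduct.exists_sum_tmul_eq (Coalgebra.comul (R := k) h)
  simp [hm v v' h h' n h₁ h₂ comul_eq, smashMul_tmul, comul_eq]

end Specialization

/-- Let `(H, R)` be a quasitriangular Hopf algebra over a field `k` and
`V` a quantum commutative left `H`-module algebra.  In the smash product `V # H` define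
`α(v) = v ⊗ 1` and `β(v) = Σ (R²·v) ⊗ R¹`.  Then `β` is an algebra anti-homomorphism
(`β(vw) = β(w)β(v)` and `β(1) = 1 ⊗ 1`) and `α(v)β(w) = β(w)α(v)` for all `v, w ∈ V`. -/
theorem beta_antihom_and_commutes
    {k H V : Type*} [Field k] [Ring H] [HopfAlgebra k H] [Ring V] [Algebra k V]
    (R : H ⊗[k] H) (hR : IsRMatrix k H R)
    (α : H →ₗ[k] V →ₗ[k] V) (hα : IsModuleAlgebra α)
    (hqc : IsQuantumCommutative α R)
    (m : V ⊗[k] H →ₗ[k] V ⊗[k] H →ₗ[k] V ⊗[k] H) (hm : IsSmashMul α m) :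
    (∀ v w : V, betaMap α R (v * w) = m (betaMap α R w) (betaMap α R v))
    ∧ betaMap α R 1 = (1 : V) ⊗ₜ[k] (1 : H)
    ∧ (∀ v w : V,
        m (v ⊗ₜ[k] (1 : H)) (betaMap α R w) = m (betaMap α R w) (v ⊗ₜ[k] (1 : H))) := by
  rw [hm.eq_smashMul]
  exact beta_antihom_and_commutes_general hR.isWeakRMatrix hα.isModuleAlgebraAction
    hqc.isBraidedCommutative
end
end

section
/- Let (H, R) be a quasitriangular Hopf algebra over a field k with bijective antipode S, V a quantum commutative left H-module algebra, d₀ = Σ S²(R¹)R² ∈ H, β : V → V#H, β(v) = Σ (R²·v)⊗R¹, and τ : V#H → V#H, τ(v⊗l) = (1⊗S(l))β(d₀·v). Then τ∘β = α, i.e. for every v ∈ V, Σ (1⊗S(R¹))β(d₀R²·v) = v⊗1 in V#H. -/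
open TensorProduct LinearMap

noncomputable section

/-!
Left multiplication by `1 ⊗ h` in `V # H` is the action of `Δ(h)` on `V ⊗ H`, where `H ⊗ H` acts
factorwise, and `β(v) = R₂₁ · (v ⊗ 1)`. The theorem is therefore the identity
`Σ Δ(S(R¹)) R₂₁ (d₀R² ⊗ 1) = 1` of `H ⊗ H`, applied to `v ⊗ 1`.

Since `R⁻¹ = Σ S(R¹) ⊗ R²`, applying `a ⊗ b ↦ S(a) b` to `R⁻¹ R = 1` gives `Σ S(R¹) d₀ R² = 1`.
Now `Δ(h) R₂₁ = R₂₁ Δᶜᵒᵖ(h)` moves `R₂₁` to the left, and `(Δ ⊗ id)(R⁻¹) = R₂₃⁻¹ R₁₃⁻¹` turns the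
remaining factor `Σ Δᶜᵒᵖ(S(R¹)) (d₀R² ⊗ 1)` into `(Σ S(R¹) d₀ R² ⊗ 1) R₂₁⁻¹ = R₂₁⁻¹`.
-/

open Bialgebra Coalgebra HopfAlgebra WithConv

theorem tensorProductComm_mul {k A B : Type*} [CommSemiring k] [Semiring A] [Algebra k A]
    [Semiring B] [Algebra k B] (s t : A ⊗[k] B) :
    TensorProduct.comm k A B (s * t) = TensorProduct.comm k A B s * TensorProduct.comm k A B t :=
  map_mul (Algebra.TensorProduct.comm k A B) s t

section LegHoms

variable (k H : Type*) [CommSemiring k] [Semiring H] [Algebra k H]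

/-- The algebra homomorphism `R ↦ R₁₃`, with values in `(H ⊗ H) ⊗ H`. -/
def leg13Hom : H ⊗[k] H →ₐ[k] (H ⊗[k] H) ⊗[k] H :=
  Algebra.TensorProduct.map Algebra.TensorProduct.includeLeft (AlgHom.id k H)

/-- The algebra homomorphism `R ↦ R₂₃`, with values in `(H ⊗ H) ⊗ H`. -/
def leg23Hom : H ⊗[k] H →ₐ[k] (H ⊗[k] H) ⊗[k] H :=
  Algebra.TensorProduct.map Algebra.TensorProduct.includeRight (AlgHom.id k H)

variable {k H}

@[simp]
theorem leg13Hom_tmul (a b : H) : leg13Hom k H (a ⊗ₜ b) = (a ⊗ₜ 1) ⊗ₜ b := rfl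

@[simp]
theorem leg23Hom_tmul (a b : H) : leg23Hom k H (a ⊗ₜ b) = (1 ⊗ₜ a) ⊗ₜ b := rfl

theorem rTensor_leg13Hom_mul_leg23Hom {A : Type*} [Semiring A] [Algebra k A]
    (f g : H →ₗ[k] A) (P Q : H ⊗[k] H) :
    rTensor H (mul' k A ∘ₗ map f g) (leg13Hom k H P * leg23Hom k H Q) =
      rTensor H f P * rTensor H g Q := by
  induction P with
  | zero => simp
  | add P P' hP hP' => simp only [map_add, add_mul, hP, hP']
  | tmul a b =>
    induction Q with
    | zero => simp
    | add Q Q' hQ hQ' => simp only [map_add, mul_add, hQ, hQ']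
    | tmul c d => simp

end LegHoms

/-- The element `d₀ = Σ S²(R¹) R²`. For a quasitriangular `(H, R)` it is the inverse of
`S(u)`, where `u = Σ S(R²) R¹` is the Drinfeld element. -/
def dZero {k H : Type*} [CommSemiring k] [Semiring H] [HopfAlgebra k H] (R : H ⊗[k] H) : H :=
  mul' k H (map (antipode k ∘ₗ antipode k) LinearMap.id R)

section LeftRMatrix

variable {k H : Type*} [CommSemiring k] [Semiring H]

/-- The axioms of an R-matrix other than the one for `(id ⊗ Δ)(R)`: `R` is invertible,
`(Δ ⊗ id)(R) = R₁₃ R₂₃` and `Δᶜᵒᵖ(h) R = R Δ(h)`. The second one is stated in `(H ⊗ H) ⊗ H`,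
where `Δ ⊗ id` takes its values. -/
structure IsLeftRMatrix [Bialgebra k H] (R : H ⊗[k] H) : Prop where
  isUnit : IsUnit R
  rTensor_comul : rTensor H comul R = leg13Hom k H R * leg23Hom k H R
  comm_comul_mul (h : H) : TensorProduct.comm k H H (comul h) * R = R * comul h

namespace IsLeftRMatrix

section Bialgebra

variable [Bialgebra k H] {R : H ⊗[k] H}

theorem comul_mul_comm (hR : IsLeftRMatrix R) (h : H) :
    comul h * TensorProduct.comm k H H R =
      TensorProduct.comm k H H R * TensorProduct.comm k H H (comul h) := by
  simpa only [tensorProductComm_mul, TensorProduct.comm_comm] using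
    congrArg (TensorProduct.comm k H H) (hR.comm_comul_mul h)

theorem rTensor_convMul {A : Type*} [Semiring A] [Algebra k A] (hR : IsLeftRMatrix R)
    (f g : WithConv (H →ₗ[k] A)) :
    rTensor H (f * g).ofConv R = rTensor H f.ofConv R * rTensor H g.ofConv R := by
  rw [← rTensor_leg13Hom_mul_leg23Hom, ← hR.rTensor_comul, ← rTensor_comp_apply]
  rfl

theorem rTensor_convOne (hR : IsLeftRMatrix R) :
    rTensor H (1 : WithConv (H →ₗ[k] H)).ofConv R = 1 := by
  refine hR.isUnit.mul_right_cancel ?_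
  simpa using (hR.rTensor_convMul 1 (toConv LinearMap.id)).symm

end Bialgebra

variable [HopfAlgebra k H] {R : H ⊗[k] H}

theorem rTensor_antipode_mul (hR : IsLeftRMatrix R) : rTensor H (antipode k) R * R = 1 := by
  simpa [hR.rTensor_convOne] using
    (hR.rTensor_convMul (toConv (antipode k)) (toConv LinearMap.id)).symm

theorem mul_rTensor_antipode (hR : IsLeftRMatrix R) : R * rTensor H (antipode k) R = 1 := by
  simpa [hR.rTensor_convOne] using
    (hR.rTensor_convMul (toConv LinearMap.id) (toConv (antipode k))).symm

theorem rTensor_comul_rTensor_antipode (hR : IsLeftRMatrix R) :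
    rTensor H comul (rTensor H (antipode k) R) =
      leg23Hom k H (rTensor H (antipode k) R) * leg13Hom k H (rTensor H (antipode k) R) := by
  set R' := rTensor H (antipode k) R
  have map_mul_comul (s t : H ⊗[k] H) :
      rTensor H comul (s * t) = rTensor H comul s * rTensor H comul t :=
    map_mul (Algebra.TensorProduct.map (comulAlgHom k H) (AlgHom.id k H)) s t
  refine left_inv_eq_right_inv (a := rTensor H comul R) ?_ ?_
  · rw [← map_mul_comul, hR.rTensor_antipode_mul]
    exact map_one (Algebra.TensorProduct.map (comulAlgHom k H) (AlgHom.id k H))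
  · calc rTensor H comul R * (leg23Hom k H R' * leg13Hom k H R')
        = leg13Hom k H R * leg23Hom k H (R * R') * leg13Hom k H R' := by
          simp only [hR.rTensor_comul, map_mul, mul_assoc]
      _ = 1 := by
          rw [hR.mul_rTensor_antipode, map_one, mul_one, ← map_mul, hR.mul_rTensor_antipode,
            map_one]

variable {ι : Type*} {s : Finset ι} {x y : ι → H}

theorem sum_antipode_mul_dZero_mul (hR : IsLeftRMatrix R) (hxy : R = ∑ i ∈ s, x i ⊗ₜ[k] y i) :
    ∑ i ∈ s, antipode k (x i) * dZero R * y i = 1 := by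
  subst hxy
  have h := congrArg (mul' k H ∘ₗ rTensor H (antipode k)) hR.rTensor_antipode_mul
  rw [map_sum, Finset.sum_mul_sum, Finset.sum_comm] at h
  simpa [dZero, Finset.mul_sum, Finset.sum_mul, antipode_mul_antidistrib,
    Algebra.TensorProduct.one_def, mul_assoc] using h

theorem sum_comm_comul_antipode_mul (hR : IsLeftRMatrix R) (hxy : R = ∑ i ∈ s, x i ⊗ₜ[k] y i) :
    ∑ i ∈ s, TensorProduct.comm k H H (comul (antipode k (x i))) * ((dZero R * y i) ⊗ₜ 1) =
      TensorProduct.comm k H H (rTensor H (antipode k) R) := by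
  set d := dZero R with hd
  let G : (H ⊗[k] H) ⊗[k] H →ₗ[k] H ⊗[k] H := mul' k (H ⊗[k] H) ∘ₗ
    map (TensorProduct.comm k H H) ((TensorProduct.mk k H H).flip 1 ∘ₗ mulLeft k d)
  have hG (t : H ⊗[k] H) (c : H) : G (t ⊗ₜ c) = TensorProduct.comm k H H t * ((d * c) ⊗ₜ 1) := rfl
  calc _ = ∑ i ∈ s, ∑ j ∈ s, (antipode k (x i) * d * y i * y j) ⊗ₜ[k] antipode k (x j) := by
        have h := congrArg G hR.rTensor_comul_rTensor_antipode
        rw [hxy] at h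
        simpa [hG, Finset.sum_mul_sum, mul_assoc] using h
    _ = _ := by
        rw [Finset.sum_comm]
        simp_rw [← TensorProduct.sum_tmul, ← Finset.sum_mul, hd,
          hR.sum_antipode_mul_dZero_mul hxy]
        simp [hxy]

theorem sum_comul_antipode_mul_comm_mul (hR : IsLeftRMatrix R)
    (hxy : R = ∑ i ∈ s, x i ⊗ₜ[k] y i) :
    ∑ i ∈ s, comul (antipode k (x i)) *
      (TensorProduct.comm k H H R * ((dZero R * y i) ⊗ₜ 1)) = 1 := by
  simp_rw [← mul_assoc, hR.comul_mul_comm, mul_assoc]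
  rw [← Finset.mul_sum, hR.sum_comm_comul_antipode_mul hxy, ← tensorProductComm_mul,
    hR.mul_rTensor_antipode]
  rfl

end IsLeftRMatrix

end LeftRMatrix

section LegsOverField

variable {k H : Type*} [Field k] [Ring H]

theorem assoc_leg13Hom [Algebra k H] (R : H ⊗[k] H) :
    TensorProduct.assoc k H H H (leg13Hom k H R) = leg13 k H R := by
  induction R with
  | zero => simp [leg13, leg12]
  | add R R' hR hR' => simp [hR, hR', leg13, leg12, TensorProduct.add_tmul]
  | tmul a b => simp [leg13, leg12]

theorem assoc_leg23Hom [Algebra k H] (R : H ⊗[k] H) :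
    TensorProduct.assoc k H H H (leg23Hom k H R) = leg23 k H R := by
  induction R with
  | zero => simp [leg23]
  | add R R' hR hR' => simp [hR, hR', leg23, TensorProduct.tmul_add]
  | tmul a b => simp [leg23]

theorem IsRMatrix.isLeftRMatrix [Bialgebra k H] {R : H ⊗[k] H} (hR : IsRMatrix k H R) :
    IsLeftRMatrix R where
  isUnit := hR.1
  rTensor_comul := by
    apply (TensorProduct.assoc k H H H).injective
    rw [hR.2.1, ← assoc_leg13Hom, ← assoc_leg23Hom]
    exact (map_mul (Algebra.TensorProduct.assoc k k k H H H) _ _).symm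
  comm_comul_mul := hR.2.2.2

end LegsOverField

section TensorRegular

variable {k H V : Type*} [CommSemiring k] [Semiring H] [AddCommMonoid V] [Module k V]

/-- For a representation `ρ` of `H` on `V`, the representation of `H ⊗ H` on `V ⊗ H` in which the
first factor acts on `V` through `ρ` and the second one on `H` by left multiplication. -/
def tensorRegularHom [Algebra k H] (ρ : H →ₐ[k] Module.End k V) :
    H ⊗[k] H →ₐ[k] Module.End k (V ⊗[k] H) :=
  Module.endTensorEndAlgHom.comp (Algebra.TensorProduct.map ρ (Algebra.lmul k H))

@[simp]
theorem tensorRegularHom_tmul_tmul [Algebra k H] (ρ : H →ₐ[k] Module.End k V) (a b h : H)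
    (v : V) : tensorRegularHom ρ (a ⊗ₜ b) (v ⊗ₜ h) = ρ a v ⊗ₜ (b * h) := rfl

theorem tau_comp_beta_eq_alpha_general [HopfAlgebra k H] {R : H ⊗[k] H} (hR : IsLeftRMatrix R)
    (ρ : H →ₐ[k] Module.End k V) (v : V) {ι : Type*} {s : Finset ι} {x y : ι → H}
    (hxy : R = ∑ i ∈ s, x i ⊗ₜ[k] y i) :
    ∑ i ∈ s, tensorRegularHom ρ (comul (antipode k (x i)))
        (tensorRegularHom ρ (TensorProduct.comm k H H R) (ρ (dZero R * y i) v ⊗ₜ[k] (1 : H))) =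
      v ⊗ₜ[k] (1 : H) := by
  simpa using congr(tensorRegularHom ρ $(hR.sum_comul_antipode_mul_comm_mul hxy) (v ⊗ₜ (1 : H)))

end TensorRegular

section SmashProduct

variable {k H V : Type*} [Field k] [Ring H] [HopfAlgebra k H] [Ring V] [Algebra k V]

theorem IsModuleAlgebra.exists_toLinearMap_eq {α : H →ₗ[k] V →ₗ[k] V} (hα : IsModuleAlgebra α) :
    ∃ ρ : H →ₐ[k] Module.End k V, ρ.toLinearMap = α :=
  ⟨AlgHom.ofLinearMap α (LinearMap.ext hα.1) fun g h ↦ LinearMap.ext (hα.2.1 g h), rfl⟩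

theorem betaMap_toLinearMap (ρ : H →ₐ[k] Module.End k V) (R : H ⊗[k] H) (v : V) :
    betaMap ρ.toLinearMap R v = tensorRegularHom ρ (TensorProduct.comm k H H R) (v ⊗ₜ 1) := by
  induction R with
  | zero => simp [betaMap]
  | add R R' hR hR' => simp_all [betaMap]
  | tmul a b => simp [betaMap]

theorem IsSmashMul.one_tmul {ρ : H →ₐ[k] Module.End k V}
    {m : V ⊗[k] H →ₗ[k] V ⊗[k] H →ₗ[k] V ⊗[k] H} (hm : IsSmashMul ρ.toLinearMap m) (h : H) :
    m (1 ⊗ₜ h) = tensorRegularHom ρ (comul h) := by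
  obtain ⟨n, h₁, h₂, hh⟩ := TensorProduct.exists_sum_tmul_eq (comul (R := k) h)
  refine TensorProduct.ext' fun v h' ↦ ?_
  rw [hm _ _ _ _ _ _ _ hh, hh]
  simp

end SmashProduct

/-- Let `(H, R)` be a quasitriangular Hopf algebra over a field `k`
with bijective antipode `S`, `V` a quantum commutative left `H`-module algebra,
`d₀ = Σ S²(R¹)R² ∈ H`, `β(v) = Σ (R²·v) ⊗ R¹` and
`τ : V#H → V#H`, `τ(v ⊗ l) = (1 ⊗ S(l)) β(d₀·v)`.  Then `τ ∘ β = α`, i.e. for every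
`v ∈ V`, `Σ (1 ⊗ S(R¹)) β(d₀ R²·v) = v ⊗ 1` in `V # H`. -/
theorem tau_comp_beta_eq_alpha
    {k H V : Type*} [Field k] [Ring H] [HopfAlgebra k H] [Ring V] [Algebra k V]
    (hS : Function.Bijective (HopfAlgebra.antipode (R := k) (A := H)))
    (R : H ⊗[k] H) (hR : IsRMatrix k H R)
    (α : H →ₗ[k] V →ₗ[k] V) (hα : IsModuleAlgebra α)
    (hqc : IsQuantumCommutative α R)
    (m : V ⊗[k] H →ₗ[k] V ⊗[k] H →ₗ[k] V ⊗[k] H) (hm : IsSmashMul α m) :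
    ∀ (v : V) (n : ℕ) (R₁ R₂ : Fin n → H),
      R = ∑ i, R₁ i ⊗ₜ[k] R₂ i →
      ∑ i, m ((1 : V) ⊗ₜ[k] HopfAlgebra.antipode (R := k) (R₁ i))
          (betaMap α R (α
            (LinearMap.mul' k H
              (TensorProduct.map
                ((HopfAlgebra.antipode (R := k) (A := H))
                  ∘ₗ (HopfAlgebra.antipode (R := k) (A := H)))
                LinearMap.id R)
             * R₂ i) v))
        = v ⊗ₜ[k] (1 : H) := by
  obtain ⟨ρ, rfl⟩ := hα.exists_toLinearMap_eq
  intro v n R₁ R₂ hxy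
  simp only [betaMap_toLinearMap, hm.one_tmul]
  exact tau_comp_beta_eq_alpha_general hR.isLeftRMatrix ρ v hxy
end
end
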